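/- Let l_1, m_1, l_2, m_2 be positive integers with l_1 ≤ m_1 < l_2 ≤ m_2. Then the number of subsets X of [l_1,m_1] ∪ [l_2,m_2] such that l_1 ∈ X, l_2 ∈ X, and gcd(X) = 1 equals Σ_{d | gcd(l_1,l_2)} μ(d) · 2^{⌊m_1/d⌋ + ⌊m_2/d⌋ − (l_1+l_2)/d}. -/

import Mathlib

/-!
Möbius inversion over `d ∣ X.gcd f` reduces counting the sets `A ⊆ X ⊆ U` with `X.gcd f = 1` to
counting, for each `d ∣ A.gcd f`, those with `d ∣ X.gcd f`. Such an `X` is `A` together with an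
arbitrary subset of the `i ∈ U \ A` with `d ∣ f i`. For two intervals with `A` the pair of left
endpoints, `U \ A` is `(l₁, m₁] ∪ (l₂, m₂]`, whose multiples of `d` are counted by floors.
-/

open Finset ArithmeticFunction

theorem sum_divisors_moebius (n : ℕ) : ∑ d ∈ n.divisors, moebius d = if n = 1 then 1 else 0 := by
  rw [← coe_mul_zeta_apply, moebius_mul_coe_zeta, one_apply]

theorem card_filter_eq_one_eq_sum_moebius {α : Type*} (s : Finset α) (g : α → ℕ) {n : ℕ}
    (hn : n ≠ 0) (hg : ∀ x ∈ s, g x ∣ n) :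
    (#{x ∈ s | g x = 1} : ℤ) = ∑ d ∈ n.divisors, moebius d * #{x ∈ s | d ∣ g x} := by
  calc (#{x ∈ s | g x = 1} : ℤ)
      = ∑ x ∈ s, ∑ d ∈ (g x).divisors, moebius d := by
        simp only [sum_divisors_moebius, sum_boole]
    _ = ∑ x ∈ s, ∑ d ∈ n.divisors, if d ∣ g x then moebius d else 0 :=
        sum_congr rfl fun x hx => by
          rw [← sum_filter, Nat.divisors_filter_dvd_of_dvd hn (hg x hx)]
    _ = ∑ d ∈ n.divisors, moebius d * #{x ∈ s | d ∣ g x} := by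
        rw [sum_comm]
        simp only [← sum_filter, sum_const, nsmul_eq_mul, mul_comm]

section FinsetInterval

variable {ι : Type*} [DecidableEq ι]

theorem filter_dvd_gcd_Icc {M : Type*} [CommMonoidWithZero M] [NormalizedGCDMonoid M]
    [DecidableRel ((· ∣ ·) : M → M → Prop)] (A U : Finset ι) (f : ι → M) (d : M) :
    {X ∈ Icc A U | d ∣ X.gcd f} = Icc A {i ∈ U | d ∣ f i} := by
  ext X
  simp only [mem_filter, mem_Icc, Finset.dvd_gcd_iff, subset_iff, forall_and, and_assoc]

theorem card_Icc_filter_of_forall_mem {A U : Finset ι} (p : ι → Prop) [DecidablePred p]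
    (hAU : A ⊆ U) (hA : ∀ i ∈ A, p i) :
    #(Icc A {i ∈ U | p i}) = 2 ^ #{i ∈ U \ A | p i} := by
  have hA' : A ⊆ {i ∈ U | p i} := fun i hi => mem_filter.2 ⟨hAU hi, hA i hi⟩
  have hsdiff : {i ∈ U \ A | p i} = {i ∈ U | p i} \ A := by grind
  rw [card_Icc_finset hA', hsdiff, card_sdiff_of_subset hA']

theorem card_Icc_filter_gcd_eq_one {A U : Finset ι} (f : ι → ℕ) (hAU : A ⊆ U)
    (hA : A.gcd f ≠ 0) :
    (#{X ∈ Icc A U | X.gcd f = 1} : ℤ) =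
      ∑ d ∈ (A.gcd f).divisors, moebius d * 2 ^ #{i ∈ U \ A | d ∣ f i} := by
  have hgcd : ∀ X ∈ Icc A U, X.gcd f ∣ A.gcd f := fun X hX => gcd_mono (mem_Icc.1 hX).1
  rw [card_filter_eq_one_eq_sum_moebius _ _ hA hgcd]
  refine sum_congr rfl fun d hd => ?_
  have hdA : ∀ i ∈ A, d ∣ f i := Finset.dvd_gcd_iff.1 (Nat.dvd_of_mem_divisors hd)
  rw [filter_dvd_gcd_Icc, card_Icc_filter_of_forall_mem _ hAU hdA, Nat.cast_pow, Nat.cast_ofNat]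

end FinsetInterval

theorem card_filter_dvd_Ioc (a b d : ℕ) : #{x ∈ Ioc a b | d ∣ x} = b / d - a / d := by
  obtain hab | hba := le_total a b
  · have hsdiff : {x ∈ Ioc a b | d ∣ x} = {x ∈ Ioc 0 b | d ∣ x} \ {x ∈ Ioc 0 a | d ∣ x} := by
      grind
    rw [hsdiff, card_sdiff_of_subset (filter_subset_filter _ (Ioc_subset_Ioc_right hab)),
      Nat.Ioc_filter_dvd_card_eq_div, Nat.Ioc_filter_dvd_card_eq_div]
  · rw [Ioc_eq_empty_of_le hba, filter_empty, card_empty,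
      Nat.sub_eq_zero_of_le (Nat.div_le_div_right hba)]

theorem Icc_union_Icc_sdiff_pair {α : Type*} [LinearOrder α] [LocallyFiniteOrder α]
    {a b c d : α} (hab : a ≤ b) (hbc : b < c) :
    (Icc a b ∪ Icc c d) \ {a, c} = Ioc a b ∪ Ioc c d := by
  grind

theorem card_filter_dvd_Ioc_union_Ioc {l₁ m₁ l₂ m₂ d : ℕ} (h₁ : l₁ ≤ m₁) (h₂ : m₁ ≤ l₂)
    (h₃ : l₂ ≤ m₂) (hd : d ∣ l₁) :
    #{x ∈ Ioc l₁ m₁ ∪ Ioc l₂ m₂ | d ∣ x} = m₁ / d + m₂ / d - (l₁ + l₂) / d := by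
  rw [filter_union, card_union_of_disjoint (disjoint_filter_filter (Ioc_disjoint_Ioc_of_le h₂)),
    card_filter_dvd_Ioc, card_filter_dvd_Ioc, Nat.add_div_of_dvd_right hd,
    tsub_add_tsub_comm (Nat.div_le_div_right h₁) (Nat.div_le_div_right h₃)]

/-- Lemma 3(a): the number of relatively prime subsets of `[l₁,m₁] ∪ [l₂,m₂]`
containing both `l₁` and `l₂` equals
`∑_{d ∣ gcd(l₁,l₂)} μ(d) 2^{⌊m₁/d⌋ + ⌊m₂/d⌋ - (l₁+l₂)/d}`. -/
theorem stmt_5 (l₁ m₁ l₂ m₂ : ℕ) (hl₁ : 0 < l₁)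
    (h₁ : l₁ ≤ m₁) (h₂ : m₁ < l₂) (h₃ : l₂ ≤ m₂) :
    ((((Finset.Icc l₁ m₁ ∪ Finset.Icc l₂ m₂).powerset).filter
        (fun X : Finset ℕ => l₁ ∈ X ∧ l₂ ∈ X ∧ X.gcd id = 1)).card : ℤ)
      = ∑ d ∈ (Nat.gcd l₁ l₂).divisors,
          (ArithmeticFunction.moebius d) *
            2 ^ (m₁ / d + m₂ / d - (l₁ + l₂) / d) := by
  set U := Icc l₁ m₁ ∪ Icc l₂ m₂
  have hfilter : {X ∈ U.powerset | l₁ ∈ X ∧ l₂ ∈ X ∧ X.gcd id = 1} =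
      {X ∈ Icc {l₁, l₂} U | X.gcd id = 1} := by
    grind
  have hpair : ({l₁, l₂} : Finset ℕ).gcd id = Nat.gcd l₁ l₂ := by
    simp [gcd_eq_nat_gcd]
  have hpair_ne_zero : ({l₁, l₂} : Finset ℕ).gcd id ≠ 0 :=
    hpair ▸ (Nat.gcd_pos_of_pos_left l₂ hl₁).ne'
  have hpair_subset : {l₁, l₂} ⊆ U := by grind
  rw [hfilter, card_Icc_filter_gcd_eq_one id hpair_subset hpair_ne_zero, hpair,
    Icc_union_Icc_sdiff_pair h₁ h₂]
  refine sum_congr rfl fun d hd => ?_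
  have hdl₁ : d ∣ l₁ := (Nat.dvd_of_mem_divisors hd).trans (Nat.gcd_dvd_left l₁ l₂)
  simp only [id, card_filter_dvd_Ioc_union_Ioc h₁ h₂.le h₃ hdl₁]
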